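/- Let κ > 0 and let u, v : ℝ × ℝ⁵ → ℂ be smooth functions which, together with all their derivatives, are Schwartz in the space variable locally uniformly in time, and which satisfy the system i∂ₜu + Δₓu + v·conj(u) = 0 and i∂ₜv + κΔₓv + u² = 0 on ℝ × ℝ⁵. Then the energy t ↦ ∫_{ℝ⁵} |∇ₓu(t,x)|² dx + (κ/2)∫_{ℝ⁵} |∇ₓv(t,x)|² dx − Re ∫_{ℝ⁵} conj(v(t,x)) u(t,x)² dx is constant in t. -/

import Mathlib

open MeasureTheory Complex ComplexConjugate

noncomputable section

abbrev E5 := EuclideanSpace ℝ (Fin 5)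

/-- Spatial partial derivative of `f` at `x` in coordinate direction `i`. -/
def pd (f : E5 → ℂ) (x : E5) (i : Fin 5) : ℂ :=
  fderiv ℝ f x (EuclideanSpace.single i 1)

/-- Spatial Laplacian. -/
def lap (f : E5 → ℂ) (x : E5) : ℂ :=
  ∑ i : Fin 5, fderiv ℝ (fun y => pd f y i) x (EuclideanSpace.single i 1)

/-- `u` and all its derivatives are Schwartz in the space variable,
locally uniformly in time. -/
def SchwartzLocUnifT (u : ℝ × E5 → ℂ) : Prop :=
  ∀ (n k : ℕ) (K : Set ℝ), IsCompact K →
    ∃ C : ℝ, ∀ t ∈ K, ∀ x : E5, ‖x‖ ^ k * ‖iteratedFDeriv ℝ n u (t, x)‖ ≤ C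

/-! Let `⟪w, z⟫ = Re (conj w * z)` be the real inner product on `ℂ`. Differentiating under the
integral sign and integrating by parts in space, the energy has time derivative
`- ∫ (2 ⟪Δu + v conj u, ∂ₜu⟫ + ⟪κ Δv + u², ∂ₜv⟫)`. By the equations the first slots are `-i ∂ₜu` and
`-i ∂ₜv`, which are orthogonal to the second ones. -/

open scoped RealInnerProductSpace ContDiff

section Derivatives

variable {E F : Type*} [NormedAddCommGroup E] [NormedSpace ℝ E]
  [NormedAddCommGroup F] [NormedSpace ℝ F]

theorem fderiv_fderiv_apply_comm {f : E → F} {z : E} (hf : ContDiffAt ℝ 2 f z) (v w : E) :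
    fderiv ℝ (fun y => fderiv ℝ f y v) z w = fderiv ℝ (fun y => fderiv ℝ f y w) z v := by
  have hdiff : DifferentiableAt ℝ (fderiv ℝ f) z :=
    (hf.fderiv_right (m := 1) (by norm_num)).differentiableAt one_ne_zero
  have second_fderiv (a b : E) :
      fderiv ℝ (fun y => fderiv ℝ f y a) z b = fderiv ℝ (fderiv ℝ f) z b a := by
    simp [fderiv_clm_apply hdiff (differentiableAt_const a)]
  rw [second_fderiv, second_fderiv]
  exact hf.isSymmSndFDerivAt (by simp) w v

/-- The time derivative `∂ₜf`, as a function on space-time. -/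
def timeDeriv (f : ℝ × E → F) (z : ℝ × E) : F :=
  deriv (fun s => f (s, z.2)) z.1

/-- The derivative `∂ᵥf` in the space direction `v`, as a function on space-time. -/
def spaceDeriv (v : E) (f : ℝ × E → F) (z : ℝ × E) : F :=
  fderiv ℝ (fun y => f (z.1, y)) z.2 v

/-- The second order operator `∑ᵢ ∂ᵢ²` in the space directions `e i`. It is the Laplacian when `e`
is an orthonormal basis; any finite family of directions is allowed. -/
def spaceLaplacian {ι : Type*} [Fintype ι] (e : ι → E) (f : ℝ × E → F) (z : ℝ × E) : F :=
  ∑ i, spaceDeriv (e i) (spaceDeriv (e i) f) z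

variable {f : ℝ × E → F}

theorem hasDerivAt_timeDeriv (hf : Differentiable ℝ f) (t : ℝ) (x : E) :
    HasDerivAt (fun s => f (s, x)) (timeDeriv f (t, x)) t :=
  DifferentiableAt.hasDerivAt (by fun_prop)

theorem timeDeriv_eq_fderiv (hf : Differentiable ℝ f) :
    timeDeriv f = fun z => fderiv ℝ f z (1, 0) := by
  ext ⟨t, x⟩
  have hslice : HasDerivAt (fun s : ℝ => (s, x)) (1, 0) t :=
    (hasDerivAt_id t).prodMk (hasDerivAt_const t x)
  exact ((hf (t, x)).hasFDerivAt.comp_hasDerivAt t hslice).deriv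

theorem spaceDeriv_eq_fderiv (hf : Differentiable ℝ f) (v : E) :
    spaceDeriv v f = fun z => fderiv ℝ f z (0, v) := by
  ext ⟨t, x⟩
  have hslice := (hf (t, x)).hasFDerivAt.comp x (hasFDerivAt_prodMk_right t x)
  exact DFunLike.congr_fun hslice.fderiv v

theorem timeDeriv_spaceDeriv_comm (hf : ContDiff ℝ 2 f) (v : E) :
    timeDeriv (spaceDeriv v f) = spaceDeriv v (timeDeriv f) := by
  have hdiff : Differentiable ℝ f := hf.differentiable two_ne_zero
  have hdiff' (w : ℝ × E) : Differentiable ℝ (fun z => fderiv ℝ f z w) :=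
    ((hf.fderiv_right (m := 1) (by norm_num)).clm_apply contDiff_const).differentiable one_ne_zero
  rw [spaceDeriv_eq_fderiv hdiff, timeDeriv_eq_fderiv hdiff, timeDeriv_eq_fderiv (hdiff' _),
    spaceDeriv_eq_fderiv (hdiff' _)]
  exact funext fun z => fderiv_fderiv_apply_comm hf.contDiffAt _ _

end Derivatives

/-- Smooth functions on space-time which, together with all their derivatives, are rapidly
decreasing in space, locally uniformly in time. For values in `ℂ` and space `E5` the field `decay`
is `SchwartzLocUnifT`. -/
structure IsSchwartzLocUnif {E F : Type*} [NormedAddCommGroup E] [NormedSpace ℝ E]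
    [NormedAddCommGroup F] [NormedSpace ℝ F] (f : ℝ × E → F) : Prop where
  contDiff : ContDiff ℝ ∞ f
  decay : ∀ (n k : ℕ) (K : Set ℝ), IsCompact K →
    ∃ C : ℝ, ∀ t ∈ K, ∀ x : E, ‖x‖ ^ k * ‖iteratedFDeriv ℝ n f (t, x)‖ ≤ C

namespace IsSchwartzLocUnif

section Closure

variable {E F G H : Type*} [NormedAddCommGroup E] [NormedSpace ℝ E]
  [NormedAddCommGroup F] [NormedSpace ℝ F] [NormedAddCommGroup G] [NormedSpace ℝ G]
  [NormedAddCommGroup H] [NormedSpace ℝ H] {f : ℝ × E → F} {g : ℝ × E → G}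

theorem differentiable (hf : IsSchwartzLocUnif f) : Differentiable ℝ f :=
  hf.contDiff.differentiable (by simp)

theorem bilinear (B : F →L[ℝ] G →L[ℝ] H) (hf : IsSchwartzLocUnif f) (hg : IsSchwartzLocUnif g) :
    IsSchwartzLocUnif fun z => B (f z) (g z) where
  contDiff := B.isBoundedBilinearMap.contDiff.comp (hf.contDiff.prodMk hg.contDiff)
  decay n k K hK := by
    choose C hC using fun i => hf.decay i k K hK
    choose D hD using fun i => hg.decay i 0 K hK
    refine ⟨‖B‖ * ∑ i ∈ Finset.range (n + 1), n.choose i * (C i * D (n - i)),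
      fun t ht x => ?_⟩
    have hterm (i : ℕ) :
        (‖x‖ ^ k * ‖iteratedFDeriv ℝ i f (t, x)‖) * ‖iteratedFDeriv ℝ (n - i) g (t, x)‖
          ≤ C i * D (n - i) :=
      mul_le_mul (hC i t ht x) (by simpa using hD (n - i) t ht x) (norm_nonneg _)
        ((by positivity : (0 : ℝ) ≤ _).trans (hC i t ht x))
    calc ‖x‖ ^ k * ‖iteratedFDeriv ℝ n (fun z => B (f z) (g z)) (t, x)‖
        ≤ ‖x‖ ^ k * (‖B‖ * ∑ i ∈ Finset.range (n + 1), n.choose i *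
            ‖iteratedFDeriv ℝ i f (t, x)‖ * ‖iteratedFDeriv ℝ (n - i) g (t, x)‖) := by
          gcongr
          exact B.norm_iteratedFDeriv_le_of_bilinear hf.contDiff hg.contDiff (t, x)
            (mod_cast le_top)
      _ = ‖B‖ * ∑ i ∈ Finset.range (n + 1), n.choose i *
            ((‖x‖ ^ k * ‖iteratedFDeriv ℝ i f (t, x)‖) *
              ‖iteratedFDeriv ℝ (n - i) g (t, x)‖) := by
          rw [mul_left_comm, Finset.mul_sum]
          congr! 2
          ring
      _ ≤ _ := by
          gcongr ‖B‖ * ∑ i ∈ _, (n.choose i : ℝ) * ?_ with i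
          exact hterm i

theorem sq {A : Type*} [NormedRing A] [NormedAlgebra ℝ A] {f : ℝ × E → A}
    (hf : IsSchwartzLocUnif f) : IsSchwartzLocUnif fun z => f z ^ 2 := by
  simpa only [pow_two, ContinuousLinearMap.mul_apply'] using
    hf.bilinear (ContinuousLinearMap.mul ℝ A) hf

theorem conj_mul {𝕜 : Type*} [RCLike 𝕜] {f g : ℝ × E → 𝕜} (hf : IsSchwartzLocUnif f)
    (hg : IsSchwartzLocUnif g) : IsSchwartzLocUnif fun z => conj (f z) * g z :=
  hf.bilinear ((ContinuousLinearMap.mul ℝ 𝕜).comp RCLike.conjCLE.toContinuousLinearMap) hg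

theorem fderiv_apply (hf : IsSchwartzLocUnif f) (w : ℝ × E) :
    IsSchwartzLocUnif fun z => fderiv ℝ f z w := by
  have hf' : ContDiff ℝ ∞ (fderiv ℝ f) := hf.contDiff.fderiv_right (by simp)
  refine ⟨hf'.clm_apply contDiff_const, fun n k K hK => ?_⟩
  obtain ⟨C, hC⟩ := hf.decay (n + 1) k K hK
  refine ⟨‖w‖ * C, fun t ht x => ?_⟩
  calc ‖x‖ ^ k * ‖iteratedFDeriv ℝ n (fun z => fderiv ℝ f z w) (t, x)‖
      ≤ ‖x‖ ^ k * (‖w‖ * ‖iteratedFDeriv ℝ n (fderiv ℝ f) (t, x)‖) := by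
        gcongr
        exact norm_iteratedFDeriv_clm_apply_const hf'.contDiffAt (mod_cast le_top)
    _ = ‖w‖ * (‖x‖ ^ k * ‖iteratedFDeriv ℝ (n + 1) f (t, x)‖) := by
        rw [norm_iteratedFDeriv_fderiv, mul_left_comm]
    _ ≤ ‖w‖ * C := by
        gcongr
        exact hC t ht x

protected theorem timeDeriv (hf : IsSchwartzLocUnif f) : IsSchwartzLocUnif (timeDeriv f) := by
  rw [timeDeriv_eq_fderiv hf.differentiable]
  exact hf.fderiv_apply _

protected theorem spaceDeriv (hf : IsSchwartzLocUnif f) (v : E) :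
    IsSchwartzLocUnif (spaceDeriv v f) := by
  rw [spaceDeriv_eq_fderiv hf.differentiable]
  exact hf.fderiv_apply _

theorem exists_norm_le_one_add_norm_rpow (hf : IsSchwartzLocUnif f) (r : ℕ) {K : Set ℝ}
    (hK : IsCompact K) :
    ∃ C : ℝ, ∀ t ∈ K, ∀ x : E, ‖f (t, x)‖ ≤ C * (1 + ‖x‖) ^ (-(r : ℝ)) := by
  obtain ⟨C₀, hC₀⟩ := hf.decay 0 0 K hK
  obtain ⟨C, hC⟩ := hf.decay 0 r K hK
  refine ⟨2 ^ (r : ℝ) * (C₀ + C), fun t ht x => ?_⟩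
  simpa using pow_mul_le_of_le_of_pow_mul_le (k := 0) (l := r) (norm_nonneg x)
    (norm_nonneg (f (t, x))) (by simpa using hC₀ t ht x) (by simpa using hC t ht x)

end Closure

section InnerClosure

variable {E F : Type*} [NormedAddCommGroup E] [NormedSpace ℝ E]
  [NormedAddCommGroup F] [InnerProductSpace ℝ F] {f g : ℝ × E → F}

protected theorem inner (hf : IsSchwartzLocUnif f) (hg : IsSchwartzLocUnif g) :
    IsSchwartzLocUnif fun z => ⟪f z, g z⟫ :=
  hf.bilinear (innerSL ℝ) hg

theorem norm_sq (hf : IsSchwartzLocUnif f) : IsSchwartzLocUnif fun z => ‖f z‖ ^ 2 := by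
  simpa only [real_inner_self_eq_norm_sq] using hf.inner hf

end InnerClosure

section Integration

variable {E F : Type*} [NormedAddCommGroup E] [NormedSpace ℝ E] [FiniteDimensional ℝ E]
  [MeasurableSpace E] [BorelSpace E] (μ : Measure E) [NormedAddCommGroup F]

section NormedSpace

variable [NormedSpace ℝ F] {f : ℝ × E → F}

theorem aestronglyMeasurable_slice (hf : IsSchwartzLocUnif f) (t : ℝ) :
    AEStronglyMeasurable (fun x => f (t, x)) μ :=
  (hf.contDiff.continuous.comp (Continuous.prodMk_right t)).aestronglyMeasurable

variable [μ.IsAddHaarMeasure]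

theorem exists_integrable_bound (hf : IsSchwartzLocUnif f) {K : Set ℝ} (hK : IsCompact K) :
    ∃ b : E → ℝ, Integrable b μ ∧ ∀ t ∈ K, ∀ x, ‖f (t, x)‖ ≤ b x := by
  obtain ⟨C, hC⟩ := hf.exists_norm_le_one_add_norm_rpow (Module.finrank ℝ E + 1) hK
  exact ⟨_, (integrable_one_add_norm (mod_cast Nat.lt_succ_self _)).const_mul C, hC⟩

theorem integrable_slice (hf : IsSchwartzLocUnif f) (t : ℝ) :
    Integrable (fun x => f (t, x)) μ := by
  obtain ⟨b, hb, hfb⟩ := hf.exists_integrable_bound μ (isCompact_singleton (x := t))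
  exact hb.mono' (hf.aestronglyMeasurable_slice μ t) (.of_forall (hfb t rfl))

theorem hasDerivAt_integral_slice (hf : IsSchwartzLocUnif f) (t : ℝ) :
    HasDerivAt (fun s => ∫ x, f (s, x) ∂μ) (∫ x, timeDeriv f (t, x) ∂μ) t := by
  obtain ⟨b, hb, hfb⟩ := hf.timeDeriv.exists_integrable_bound μ (isCompact_closedBall t 1)
  exact (hasDerivAt_integral_of_dominated_loc_of_deriv_le
    (Metric.closedBall_mem_nhds t one_pos)
    (.of_forall (hf.aestronglyMeasurable_slice μ)) (hf.integrable_slice μ t)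
    (hf.timeDeriv.aestronglyMeasurable_slice μ t)
    (.of_forall fun x s hs => hfb s hs x) hb
    (.of_forall fun x s _ => hasDerivAt_timeDeriv hf.differentiable s x)).2

end NormedSpace

variable [μ.IsAddHaarMeasure] [InnerProductSpace ℝ F] {f g : ℝ × E → F}

theorem integral_inner_spaceDeriv (hf : IsSchwartzLocUnif f) (hg : IsSchwartzLocUnif g)
    (t : ℝ) (v : E) :
    ∫ x, ⟪f (t, x), spaceDeriv v g (t, x)⟫ ∂μ
      = -∫ x, ⟪spaceDeriv v f (t, x), g (t, x)⟫ ∂μ :=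
  integral_bilinear_fderiv_right_eq_neg_left_of_integrable (B := innerSL ℝ)
    (((hf.spaceDeriv v).inner hg).integrable_slice μ t)
    ((hf.inner (hg.spaceDeriv v)).integrable_slice μ t)
    ((hf.inner hg).integrable_slice μ t)
    (fun x _ => (hf.differentiable.comp (by fun_prop : Differentiable ℝ (Prod.mk t))) x)
    (fun x _ => (hg.differentiable.comp (by fun_prop : Differentiable ℝ (Prod.mk t))) x)

theorem hasDerivAt_integral_norm_sq_spaceDeriv (hf : IsSchwartzLocUnif f) (t : ℝ) (v : E) :
    HasDerivAt (fun s => ∫ x, ‖spaceDeriv v f (s, x)‖ ^ 2 ∂μ)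
      (-(2 * ∫ x, ⟪spaceDeriv v (spaceDeriv v f) (t, x), timeDeriv f (t, x)⟫ ∂μ)) t := by
  have hfv := hf.spaceDeriv v
  have htime (x : E) : timeDeriv (fun z => ‖spaceDeriv v f z‖ ^ 2) (t, x)
      = 2 * ⟪spaceDeriv v f (t, x), spaceDeriv v (timeDeriv f) (t, x)⟫ := by
    rw [← timeDeriv_spaceDeriv_comm (hf.contDiff.of_le (by norm_cast))]
    exact (hasDerivAt_timeDeriv hfv.differentiable t x).norm_sq.deriv
  have hderiv := hfv.norm_sq.hasDerivAt_integral_slice μ t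
  simp only [htime, integral_const_mul] at hderiv
  rwa [hfv.integral_inner_spaceDeriv μ hf.timeDeriv, mul_neg] at hderiv

end Integration

end IsSchwartzLocUnif

section DirichletEnergy

variable {ι E F : Type*} [Fintype ι] [NormedAddCommGroup E] [NormedSpace ℝ E]
  [MeasurableSpace E] (μ : Measure E) (e : ι → E) [NormedAddCommGroup F]

/-- The Dirichlet energy `∫ ∑ᵢ |∂ᵢf|²` at a given time, in the space directions `e i`. -/
def dirichletEnergy [NormedSpace ℝ F] (f : ℝ × E → F) (t : ℝ) : ℝ :=
  ∫ x, ∑ i, ‖spaceDeriv (e i) f (t, x)‖ ^ 2 ∂μ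

variable [FiniteDimensional ℝ E] [BorelSpace E] [μ.IsAddHaarMeasure] [InnerProductSpace ℝ F]
  {f : ℝ × E → F}

namespace IsSchwartzLocUnif

theorem integrable_inner_spaceLaplacian_timeDeriv (hf : IsSchwartzLocUnif f) (t : ℝ) :
    Integrable (fun x => ⟪spaceLaplacian e f (t, x), timeDeriv f (t, x)⟫) μ := by
  simp only [spaceLaplacian, sum_inner]
  exact integrable_finsetSum _ fun i _ =>
    (((hf.spaceDeriv (e i)).spaceDeriv (e i)).inner hf.timeDeriv).integrable_slice μ t

theorem hasDerivAt_dirichletEnergy (hf : IsSchwartzLocUnif f) (t : ℝ) :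
    HasDerivAt (dirichletEnergy μ e f)
      (-(2 * ∫ x, ⟪spaceLaplacian e f (t, x), timeDeriv f (t, x)⟫ ∂μ)) t := by
  have henergy : dirichletEnergy μ e f
      = fun s => ∑ i, ∫ x, ‖spaceDeriv (e i) f (s, x)‖ ^ 2 ∂μ :=
    funext fun s => integral_finsetSum _ fun i _ =>
      (hf.spaceDeriv (e i)).norm_sq.integrable_slice μ s
  have hlaplacian : ∫ x, ⟪spaceLaplacian e f (t, x), timeDeriv f (t, x)⟫ ∂μ
      = ∑ i, ∫ x, ⟪spaceDeriv (e i) (spaceDeriv (e i) f) (t, x), timeDeriv f (t, x)⟫ ∂μ := by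
    simp only [spaceLaplacian, sum_inner]
    exact integral_finsetSum _ fun i _ =>
      (((hf.spaceDeriv (e i)).spaceDeriv (e i)).inner hf.timeDeriv).integrable_slice μ t
  rw [henergy, hlaplacian, Finset.mul_sum, ← Finset.sum_neg_distrib]
  exact HasDerivAt.fun_sum fun i _ => hf.hasDerivAt_integral_norm_sq_spaceDeriv μ t (e i)

end IsSchwartzLocUnif

end DirichletEnergy

theorem inner_eq_zero_of_I_mul_add_eq_zero {a b : ℂ} (h : I * a + b = 0) : ⟪b, a⟫ = 0 := by
  rw [← neg_eq_of_add_eq_zero_right h, Complex.inner]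
  simp [mul_comm]

section Interaction

variable {E : Type*} [NormedAddCommGroup E] [NormedSpace ℝ E] {u v : ℝ × E → ℂ}

theorem timeDeriv_inner_sq (hu : Differentiable ℝ u) (hv : Differentiable ℝ v) (z : ℝ × E) :
    timeDeriv (fun z => ⟪v z, u z ^ 2⟫) z
      = 2 * ⟪v z * conj (u z), timeDeriv u z⟫ + ⟪u z ^ 2, timeDeriv v z⟫ := by
  have hderiv := (hasDerivAt_timeDeriv hv z.1 z.2).inner ℝ
    ((hasDerivAt_timeDeriv hu z.1 z.2).fun_pow 2)
  have hshift (a b c : ℂ) : ⟪a, 2 * b * c⟫ = 2 * ⟪a * conj b, c⟫ := by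
    simp only [Complex.inner, map_mul, conj_conj, mul_re, mul_im, re_ofNat, im_ofNat, conj_re,
      conj_im]
    ring
  simp only [Nat.cast_ofNat, Nat.add_one_sub_one, pow_one, hshift] at hderiv
  rw [real_inner_comm (timeDeriv v z)]
  exact hderiv.deriv

end Interaction

section SchrodingerSystem

variable {ι E : Type*} [Fintype ι] [NormedAddCommGroup E] [NormedSpace ℝ E]
  [MeasurableSpace E] (μ : Measure E) (e : ι → E) (κ : ℝ) {u v : ℝ × E → ℂ}

/-- The interaction energy `Re ∫ conj v * u²` of two waves at a given time. -/
def interactionEnergy (u v : ℝ × E → ℂ) (t : ℝ) : ℝ :=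
  (∫ x, conj (v (t, x)) * u (t, x) ^ 2 ∂μ).re

/-- The conserved energy of the system `i∂ₜu + Δu + v conj u = 0`, `i∂ₜv + κΔv + u² = 0`, where
`Δ` is `spaceLaplacian e`. -/
def schrodingerEnergy (u v : ℝ × E → ℂ) (t : ℝ) : ℝ :=
  dirichletEnergy μ e u t + κ / 2 * dirichletEnergy μ e v t - interactionEnergy μ u v t

variable [FiniteDimensional ℝ E] [BorelSpace E] [μ.IsAddHaarMeasure]

theorem hasDerivAt_interactionEnergy (hu : IsSchwartzLocUnif u) (hv : IsSchwartzLocUnif v)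
    (t : ℝ) :
    HasDerivAt (interactionEnergy μ u v)
      (∫ x, timeDeriv (fun z => ⟪v z, u z ^ 2⟫) (t, x) ∂μ) t := by
  have henergy : interactionEnergy μ u v = fun s => ∫ x, ⟪v (s, x), u (s, x) ^ 2⟫ ∂μ := by
    ext s
    simp only [Complex.inner, mul_comm _ (conj _)]
    exact (integral_re ((hv.conj_mul hu.sq).integrable_slice μ s)).symm
  rw [henergy]
  exact (hv.inner hu.sq).hasDerivAt_integral_slice μ t

theorem hasDerivAt_schrodingerEnergy (hu : IsSchwartzLocUnif u) (hv : IsSchwartzLocUnif v)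
    (t : ℝ) :
    HasDerivAt (schrodingerEnergy μ e κ u v)
      (-∫ x, (2 * ⟪spaceLaplacian e u (t, x) + v (t, x) * conj (u (t, x)), timeDeriv u (t, x)⟫
        + ⟪(κ : ℂ) * spaceLaplacian e v (t, x) + u (t, x) ^ 2, timeDeriv v (t, x)⟫) ∂μ) t := by
  have hsplit (x : E) :
      2 * ⟪spaceLaplacian e u (t, x) + v (t, x) * conj (u (t, x)), timeDeriv u (t, x)⟫
        + ⟪(κ : ℂ) * spaceLaplacian e v (t, x) + u (t, x) ^ 2, timeDeriv v (t, x)⟫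
      = 2 * ⟪spaceLaplacian e u (t, x), timeDeriv u (t, x)⟫
        + κ * ⟪spaceLaplacian e v (t, x), timeDeriv v (t, x)⟫
        + timeDeriv (fun z => ⟪v z, u z ^ 2⟫) (t, x) := by
    rw [timeDeriv_inner_sq hu.differentiable hv.differentiable, ← real_smul, inner_add_left,
      inner_add_left, real_inner_smul_left]
    ring
  have hint_u := (hu.integrable_inner_spaceLaplacian_timeDeriv μ e t).const_mul 2
  have hint_v := (hv.integrable_inner_spaceLaplacian_timeDeriv μ e t).const_mul κ
  have hint_uv := (hv.inner hu.sq).timeDeriv.integrable_slice μ t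
  have hderiv := ((hu.hasDerivAt_dirichletEnergy μ e t).add
    ((hv.hasDerivAt_dirichletEnergy μ e t).const_mul (κ / 2))).sub
    (hasDerivAt_interactionEnergy μ hu hv t)
  simp only [hsplit]
  rw [integral_add (hint_u.fun_add hint_v) hint_uv, integral_add hint_u hint_v, integral_const_mul,
    integral_const_mul]
  exact hderiv.congr_deriv (by ring)

theorem energy_conservation_general (hu : IsSchwartzLocUnif u) (hv : IsSchwartzLocUnif v)
    (heq1 : ∀ z, I * timeDeriv u z + spaceLaplacian e u z + v z * conj (u z) = 0)
    (heq2 : ∀ z, I * timeDeriv v z + (κ : ℂ) * spaceLaplacian e v z + u z ^ 2 = 0)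
    (t₁ t₂ : ℝ) :
    schrodingerEnergy μ e κ u v t₁ = schrodingerEnergy μ e κ u v t₂ := by
  have horth_u (z : ℝ × E) : ⟪spaceLaplacian e u z + v z * conj (u z), timeDeriv u z⟫ = 0 :=
    inner_eq_zero_of_I_mul_add_eq_zero (by rw [← add_assoc, heq1])
  have horth_v (z : ℝ × E) : ⟪(κ : ℂ) * spaceLaplacian e v z + u z ^ 2, timeDeriv v z⟫ = 0 :=
    inner_eq_zero_of_I_mul_add_eq_zero (by rw [← add_assoc, heq2])
  have hderiv (t : ℝ) : HasDerivAt (schrodingerEnergy μ e κ u v) 0 t := by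
    simpa [horth_u, horth_v] using hasDerivAt_schrodingerEnergy μ e κ hu hv t
  exact is_const_of_deriv_eq_zero (fun t => (hderiv t).differentiableAt)
    (fun t => (hderiv t).deriv) t₁ t₂

end SchrodingerSystem

theorem energy_conservation (κ : ℝ) (hκ : 0 < κ) (u v : ℝ × E5 → ℂ)
    (hu : ContDiff ℝ (⊤ : ℕ∞) u) (hv : ContDiff ℝ (⊤ : ℕ∞) v)
    (hus : SchwartzLocUnifT u) (hvs : SchwartzLocUnifT v)
    (heq1 : ∀ (t : ℝ) (x : E5),
      I * deriv (fun s => u (s, x)) t + lap (fun y => u (t, y)) x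
        + v (t, x) * conj (u (t, x)) = 0)
    (heq2 : ∀ (t : ℝ) (x : E5),
      I * deriv (fun s => v (s, x)) t + (κ : ℂ) * lap (fun y => v (t, y)) x
        + (u (t, x)) ^ 2 = 0) :
    ∀ t₁ t₂ : ℝ,
      ((∫ x : E5, ∑ i : Fin 5, ‖pd (fun y => u (t₁, y)) x i‖ ^ 2)
          + (κ / 2) * (∫ x : E5, ∑ i : Fin 5, ‖pd (fun y => v (t₁, y)) x i‖ ^ 2)
          - (∫ x : E5, conj (v (t₁, x)) * (u (t₁, x)) ^ 2).re)
        = ((∫ x : E5, ∑ i : Fin 5, ‖pd (fun y => u (t₂, y)) x i‖ ^ 2)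
          + (κ / 2) * (∫ x : E5, ∑ i : Fin 5, ‖pd (fun y => v (t₂, y)) x i‖ ^ 2)
          - (∫ x : E5, conj (v (t₂, x)) * (u (t₂, x)) ^ 2).re) :=
  energy_conservation_general volume (fun i => EuclideanSpace.single i 1) κ ⟨hu, hus⟩ ⟨hv, hvs⟩
    (fun z => heq1 z.1 z.2) (fun z => heq2 z.1 z.2)
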